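/- arXiv:1712.06403 — 2 statements merged into one kernel-verified Lean document; each statement's English description precedes it below -/
import Mathlib

section
/- Let a and b be even integers with a, b ≥ 6. For every ε > 0 there exists N such that for all disjoint finite sets S and T with |S| ≥ N and |T| ≥ N, the family ((S choose a) × (T choose b+1)) ∪ ((S choose a+1) × (T choose b)) can be exactly covered using at most [(14/15)^(b/6) + (14/15)^(a/6)] · (1 + ε) · C(|S|, a/2) · C(|T|, b/2) complete (a+b+1)-partite (a+b+1)-graphs on S ∪ T, where C(n, k) denotes the binomial coefficient. -/
/-- A complete `r`-partite `r`-graph (a "block") on a finite vertex set `V ⊆ ℕ`: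
it is determined by `r` pairwise disjoint nonempty subsets of `V`. -/
structure Block (V : Finset ℕ) (r : ℕ) where
  parts : Fin r → Finset ℕ
  nonempty : ∀ i, (parts i).Nonempty
  subset : ∀ i, parts i ⊆ V
  disj : ∀ i j, i ≠ j → Disjoint (parts i) (parts j)

/-- The edge set of a block: all sets contained in the union of the parts
meeting each part in exactly one vertex. -/
def Block.edges {V : Finset ℕ} {r : ℕ} (B : Block V r) : Set (Finset ℕ) :=
  {X | (∀ i, (X ∩ B.parts i).card = 1) ∧ ∀ x ∈ X, ∃ i, x ∈ B.parts i}

/-- `ExactCover V r k F` : there are `k` complete `r`-partite `r`-graphs on `V`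
whose edge sets are pairwise disjoint and whose union is the family `F`. -/
def ExactCover (V : Finset ℕ) (r k : ℕ) (F : Set (Finset ℕ)) : Prop :=
  ∃ B : Fin k → Block V r,
    (∀ i j, i ≠ j → Disjoint (B i).edges (B j).edges) ∧
    (⋃ i, (B i).edges) = F

/-- `f r n` : the minimum number of complete `r`-partite `r`-graphs needed to
partition the edge set of the complete `r`-uniform hypergraph on `[n]`. -/
noncomputable def f (r n : ℕ) : ℕ :=
  sInf {k | ExactCover (Finset.range n) r k
    {X | X ⊆ Finset.range n ∧ X.card = r}}

/-!
Attach a variable to each vertex. A product of `r` linear forms with coefficients in `ℕ` is, as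
soon as it is squarefree with coefficients `0` and `1`, the generating polynomial of the edges of a
block. Since nothing cancels over `ℕ`, an exact cover by `k` blocks is the same thing as an
expression of the generating polynomial of the family as a sum of `k` products of linear forms.
The family at hand has generating polynomial `e_a(S) e_{b+1}(T) + e_{a+1}(S) e_b(T)`, where `e_i`
denotes an elementary symmetric polynomial.

For odd degree the Graham–Pollak construction writes `e_{2d+1}` as a sum of `C(n, d)` products. For
even degree one can do better. Split the `n` vertices into about `√n` chunks of size about `√n`.
Up to `O(n^{d - 1/2})` products, `e_{2d}` is the sum of the products `e₂(A₁) ⋯ e₂(A_d)` over all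
sets of `d` chunks. Each `e₂(A)` is a sum of copies of the edge polynomial of `K₄`, or of `K₆`,
and the product of the edge polynomials of `K₄` and `K₆` takes 14 products of linear forms instead
of the obvious `3 * 5 = 15`. Pairing off the chunks gains a factor `14 / 15` for each of `⌊d / 2⌋`
pairs.
-/

section ElementarySymmetric

variable {R : Type*} [CommSemiring R]

theorem esymm_zero (M : Multiset R) : M.esymm 0 = 1 := by
  simp [Multiset.esymm]

theorem esymm_one (M : Multiset R) : M.esymm 1 = M.sum := by
  simp [Multiset.esymm, Multiset.powersetCard_one]

theorem zero_esymm_succ (n : ℕ) : (0 : Multiset R).esymm (n + 1) = 0 := by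
  simp [Multiset.esymm, Multiset.powersetCard_zero_right]

theorem cons_esymm_succ (x : R) (M : Multiset R) (n : ℕ) :
    (x ::ₘ M).esymm (n + 1) = M.esymm (n + 1) + x * M.esymm n := by
  simp [Multiset.esymm, Multiset.powersetCard_cons, Multiset.sum_map_mul_left]

theorem add_esymm (A B : Multiset R) (n : ℕ) :
    (A + B).esymm n =
      ∑ ij ∈ Finset.HasAntidiagonal.antidiagonal n, A.esymm ij.1 * B.esymm ij.2 := by
  induction A using Multiset.induction_on generalizing n with
  | empty =>
    cases n with
    | zero => simp [esymm_zero]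
    | succ n => simp [Finset.Nat.sum_antidiagonal_succ, esymm_zero, zero_esymm_succ]
  | cons x A ih =>
    cases n with
    | zero => simp [esymm_zero]
    | succ n =>
      rw [Multiset.cons_add, cons_esymm_succ, ih, ih, Finset.Nat.sum_antidiagonal_succ,
        Finset.Nat.sum_antidiagonal_succ]
      simp only [cons_esymm_succ, esymm_zero, add_mul, Finset.sum_add_distrib, mul_assoc,
        ← Finset.mul_sum]
      ring

theorem add_replicate_zero_esymm (A : Multiset R) (k n : ℕ) :
    (A + Multiset.replicate k 0).esymm n = A.esymm n := by
  induction k with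
  | zero => simp
  | succ k ih =>
    rw [Multiset.replicate_succ, Multiset.add_cons]
    cases n with
    | zero => simp only [esymm_zero]
    | succ n => rw [cons_esymm_succ, ih, zero_mul, add_zero]

theorem add_esymm_two (A B : Multiset R) :
    (A + B).esymm 2 = (B.sum ::ₘ A).esymm 2 + B.esymm 2 := by
  rw [add_esymm, cons_esymm_succ]
  simp only [Finset.Nat.sum_antidiagonal_succ, Finset.Nat.antidiagonal_zero,
    Finset.sum_singleton, zero_add, esymm_zero, esymm_one]
  ring

end ElementarySymmetric

section Multisets

variable {α : Type*}

theorem exists_eq_map_univ_fin {n : ℕ} (s : Multiset α) (hs : s.card = n) :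
    ∃ g : Fin n → α, s = Finset.univ.val.map g := by
  obtain ⟨l, rfl⟩ : ∃ l : List α, (l : Multiset α) = s := Quotient.exists_rep s
  obtain rfl : l.length = n := hs
  exact ⟨l.get, by rw [Fin.univ_val_map, List.ofFn_get]⟩

theorem exists_sum_eq_of_card_le_mul (K m : ℕ) (M : Multiset α) (hM : M.card ≤ K * m) :
    ∃ C : Multiset (Multiset α), C.card = K ∧ C.sum = M ∧ ∀ A ∈ C, A.card ≤ m := by
  induction K generalizing M with
  | zero => exact ⟨0, rfl, by simpa [eq_comm] using hM, by simp⟩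
  | succ K ih =>
    obtain ⟨l, rfl⟩ : ∃ l : List α, (l : Multiset α) = M := Quotient.exists_rep M
    obtain ⟨C, hCK, hCl, hC⟩ := ih (l.drop m) <| by
      rw [Nat.succ_mul] at hM
      simpa using hM
    exact ⟨l.take m ::ₘ C, by simp [hCK], by simp [hCl], by simpa using hC⟩

theorem card_sum_le_mul {m : ℕ} (C : Multiset (Multiset α)) (hC : ∀ A ∈ C, A.card ≤ m) :
    C.sum.card ≤ C.card * m := by
  rw [← C.card_map Multiset.card, ← smul_eq_mul]
  exact (Multiset.card_join C).trans_le
    (Multiset.sum_le_card_nsmul _ _ (Multiset.forall_mem_map_iff.2 hC))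

end Multisets

/-- `p` is a sum of at most `c` products of `r` elements of `L`. When `L` consists of the linear
forms over `ℕ` in the vertices, a product of `r` of them stands for a block, and such a sum for a
cover by at most `c` blocks in which the multiplicities are recorded by the coefficients of `p`. -/
def HasBlockSum {R : Type*} [CommSemiring R] (L : AddSubmonoid R) (r : ℕ) (c : ℝ) (p : R) : Prop :=
  ∃ s : Multiset (Multiset R), (s.card : ℝ) ≤ c ∧
    (∀ t ∈ s, t.card = r ∧ ∀ x ∈ t, x ∈ L) ∧ p = (s.map Multiset.prod).sum

namespace HasBlockSum

section Calculus

variable {R : Type*} [CommSemiring R] {L : AddSubmonoid R} {r r' : ℕ} {c c' : ℝ} {p p' : R}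

theorem mono (h : HasBlockSum L r c p) (hc : c ≤ c') : HasBlockSum L r c' p := by
  obtain ⟨s, hs, h⟩ := h
  exact ⟨s, hs.trans hc, h⟩

theorem nonneg (h : HasBlockSum L r c p) : 0 ≤ c := by
  obtain ⟨s, hs, -⟩ := h
  exact s.card.cast_nonneg.trans hs

theorem zero (hc : 0 ≤ c) : HasBlockSum L r c 0 := ⟨0, by simpa using hc, by simp, by simp⟩

theorem one : HasBlockSum L 0 1 1 := ⟨{0}, by simp, by simp, by simp⟩

theorem of_mem (hp : p ∈ L) : HasBlockSum L 1 1 p := ⟨{{p}}, by simp, by simpa using hp, by simp⟩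

theorem add (h : HasBlockSum L r c p) (h' : HasBlockSum L r c' p') :
    HasBlockSum L r (c + c') (p + p') := by
  obtain ⟨s, hs, hsL, rfl⟩ := h
  obtain ⟨s', hs', hsL', rfl⟩ := h'
  refine ⟨s + s', by push_cast [Multiset.card_add]; gcongr, fun t ht => ?_, by simp⟩
  exact (Multiset.mem_add.1 ht).elim (hsL t) (hsL' t)

theorem mul (h : HasBlockSum L r c p) (h' : HasBlockSum L r' c' p') :
    HasBlockSum L (r + r') (c * c') (p * p') := by
  have hc := h.nonneg
  obtain ⟨s, hs, hsL, rfl⟩ := h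
  obtain ⟨s', hs', hsL', rfl⟩ := h'
  refine ⟨(s ×ˢ s').map fun t => t.1 + t.2, ?_, ?_, ?_⟩
  · push_cast [Multiset.card_map, Multiset.card_product]
    gcongr
  · simp only [Multiset.mem_map, Multiset.mem_product, forall_exists_index, and_imp]
    rintro _ ⟨u, v⟩ hu hv rfl
    refine ⟨by simp [(hsL u hu).1, (hsL' v hv).1], fun x hx => ?_⟩
    exact (Multiset.mem_add.1 hx).elim ((hsL u hu).2 x) ((hsL' v hv).2 x)
  · rw [Multiset.map_map, ← Multiset.sum_map_mul_right]
    simp only [← Multiset.sum_map_mul_left]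
    simp [SProd.sprod, Multiset.product, Multiset.map_bind, Multiset.sum_bind]

theorem mul_of_mem (hp : p ∈ L) (hp' : p' ∈ L) : HasBlockSum L 2 1 (p * p') := by
  simpa using (of_mem hp).mul (of_mem hp')

theorem multiset_sum {ι : Type*} (s : Multiset ι) {p : ι → R}
    (h : ∀ i ∈ s, HasBlockSum L r c (p i)) : HasBlockSum L r (s.card * c) (s.map p).sum := by
  induction s using Multiset.induction_on with
  | empty => simpa using zero le_rfl
  | cons i s ih =>
    rw [Multiset.map_cons, Multiset.sum_cons, Multiset.card_cons]
    have hi := h i (Multiset.mem_cons_self i s)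
    have hs := ih fun j hj => h j (Multiset.mem_cons_of_mem hj)
    exact (hi.add hs).mono (by push_cast; linarith)

theorem sum_mul_sum {ι κ : Type*} (s : Multiset ι) (t : Multiset κ) {p : ι → R} {q : κ → R}
    (h : ∀ i ∈ s, ∀ j ∈ t, HasBlockSum L r c (p i * q j)) :
    HasBlockSum L r (s.card * (t.card * c)) ((s.map p).sum * (t.map q).sum) := by
  rw [← Multiset.sum_map_mul_right]
  refine multiset_sum s fun i hi => ?_
  rw [← Multiset.sum_map_mul_left]
  exact multiset_sum t fun j hj => h i hi j hj

end Calculus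

section GrahamPollak

variable {R : Type*} [CommSemiring R] {L : AddSubmonoid R}

-- Order the vertices and cut each edge at its vertices of even rank, which contribute one
-- singleton part each. The element `y` collects the vertices not in `M`, all preceding `M`.
theorem esymm_add_mul_esymm (M : Multiset R) (hM : ∀ x ∈ M, x ∈ L) (d : ℕ) {y : R} (hy : y ∈ L) :
    HasBlockSum L (2 * d + 1) (M.card.choose d) (M.esymm (2 * d + 1) + y * M.esymm (2 * d)) := by
  induction M using Multiset.induction_on generalizing d y with
  | empty =>
    cases d with
    | zero => simpa [esymm_zero, zero_esymm_succ] using of_mem hy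
    | succ d => simpa [mul_add, zero_esymm_succ] using zero le_rfl
  | cons x M ih =>
    obtain ⟨hx, hM⟩ := Multiset.forall_mem_cons.1 hM
    have hcut_later := ih hM d (L.add_mem hx hy)
    cases d with
    | zero =>
      convert hcut_later using 1
      · simp
      · simp only [cons_esymm_succ, mul_zero, esymm_zero]
        ring
    | succ d =>
      have hcut_here := (mul_of_mem hy hx).mul (ih hM d L.zero_mem)
      rw [show 2 + (2 * d + 1) = 2 * (d + 1) + 1 by ring] at hcut_here
      convert hcut_later.add hcut_here using 1
      · rw [Multiset.card_cons, Nat.choose_succ_succ]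
        push_cast
        ring
      · rw [cons_esymm_succ, show 2 * (d + 1) = 2 * d + 1 + 1 by ring, cons_esymm_succ]
        ring

theorem esymm_odd (M : Multiset R) (hM : ∀ x ∈ M, x ∈ L) (d : ℕ) :
    HasBlockSum L (2 * d + 1) (M.card.choose d) (M.esymm (2 * d + 1)) := by
  simpa using esymm_add_mul_esymm M hM d L.zero_mem

theorem esymm_even (M : Multiset R) (hM : ∀ x ∈ M, x ∈ L) (d : ℕ) :
    HasBlockSum L (2 * d) (M.card.choose d) (M.esymm (2 * d)) := by
  cases d with
  | zero => simpa [esymm_zero] using one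
  | succ d =>
    rw [show 2 * (d + 1) = 1 + (2 * d + 1) by ring]
    induction M using Multiset.induction_on with
    | empty => simpa [add_comm 1, zero_esymm_succ] using zero le_rfl
    | cons x M ih =>
      obtain ⟨hx, hM⟩ := Multiset.forall_mem_cons.1 hM
      convert (ih hM).add ((of_mem hx).mul (esymm_odd M hM d)) using 1
      · rw [Multiset.card_cons, Nat.choose_succ_succ]
        push_cast
        ring
      · rw [add_comm 1, cons_esymm_succ]

theorem esymm (M : Multiset R) (hM : ∀ x ∈ M, x ∈ L) (i : ℕ) :
    HasBlockSum L i (M.card.choose (i / 2)) (M.esymm i) := by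
  obtain ⟨d, rfl | rfl⟩ := i.even_or_odd'
  · simpa using esymm_even M hM d
  · simpa [show (2 * d + 1) / 2 = d by omega] using esymm_odd M hM d

theorem esymm_le_pow {M : Multiset R} (hM : ∀ x ∈ M, x ∈ L) {n : ℕ} (hn : M.card ≤ n) (i : ℕ) :
    HasBlockSum L i ((n : ℝ) ^ (i / 2)) (M.esymm i) := by
  refine (esymm M hM i).mono ?_
  exact_mod_cast (Nat.choose_le_pow _ _).trans (Nat.pow_le_pow_left hn _)

end GrahamPollak

end HasBlockSum

section CompleteGraphProducts

variable {R : Type*} [CommSemiring R] {L : AddSubmonoid R}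

theorem exists_fin_esymm_eq {A : Multiset R} (hA : ∀ x ∈ A, x ∈ L) {n : ℕ} (hn : A.card ≤ n) :
    ∃ x : Fin n → R, (∀ i, x i ∈ L) ∧ ∀ k, A.esymm k = (Finset.univ.val.map x).esymm k := by
  obtain ⟨x, hx⟩ := exists_eq_map_univ_fin (n := n) (A + Multiset.replicate (n - A.card) 0)
    (by rw [Multiset.card_add, Multiset.card_replicate]; omega)
  refine ⟨x, fun i => ?_, fun k => by rw [← hx, add_replicate_zero_esymm]⟩
  have hi : x i ∈ A + Multiset.replicate (n - A.card) 0 :=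
    hx ▸ Multiset.mem_map_of_mem x (Finset.mem_univ i)
  rcases Multiset.mem_add.1 hi with hi | hi
  · exact hA _ hi
  · exact Multiset.eq_of_mem_replicate hi ▸ L.zero_mem

-- Cut `M` into `K` chunks and enlarge each of them by the sum of all later ones.
theorem exists_esymm_two_eq_sum {K m : ℕ} {M : Multiset R} (hM : ∀ x ∈ M, x ∈ L)
    (hMK : M.card ≤ K * m) :
    ∃ C : Multiset (Multiset R), C.card = K ∧ (∀ A ∈ C, A.card ≤ m + 1 ∧ ∀ x ∈ A, x ∈ L) ∧
      M.esymm 2 = (C.map (Multiset.esymm · 2)).sum := by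
  obtain ⟨C, rfl, rfl, hC⟩ := exists_sum_eq_of_card_le_mul K m M hMK
  clear hMK
  induction C using Multiset.induction_on with
  | empty => exact ⟨0, by simp, by simp, by simp [zero_esymm_succ]⟩
  | cons A C ih =>
    rw [Multiset.sum_cons] at hM ⊢
    obtain ⟨hA, hCm⟩ := Multiset.forall_mem_cons.1 hC
    have hAL : ∀ x ∈ A, x ∈ L := fun x hx => hM x (Multiset.mem_add.2 (.inl hx))
    have hCL : ∀ x ∈ C.sum, x ∈ L := fun x hx => hM x (Multiset.mem_add.2 (.inr hx))
    obtain ⟨D, hDcard, hD, hsum⟩ := ih hCm hCL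
    refine ⟨(C.sum.sum ::ₘ A) ::ₘ D, by simp [hDcard], ?_, ?_⟩
    · exact Multiset.forall_mem_cons.2 ⟨⟨by simpa using hA,
        Multiset.forall_mem_cons.2 ⟨L.multiset_sum_mem _ hCL, hAL⟩⟩, hD⟩
    · rw [add_esymm_two, hsum, Multiset.map_cons, Multiset.sum_cons]

namespace HasBlockSum

-- `E(K₆)` is a disjoint union of graphs `C₁, C₂, C₃, D` such that each `Cᵢ` and `C₁ ∪ D` are
-- disjoint unions of two complete bipartite graphs, while `C₂ ∪ D` and `C₃ ∪ D` are complete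
-- bipartite. If `M₁, M₂, M₃` are the perfect matchings of `K₄`, then `E(K₄) × E(K₆)` is the
-- disjoint union of the `(E(K₄) \ Mᵢ) × Cᵢ` and the `Mᵢ × (Cᵢ ∪ D)`, where `E(K₄) \ Mᵢ` is a
-- four-cycle, that is, complete bipartite: this takes `3 * 2 + (4 + 2 + 2) = 14` products.
theorem esymm_two_fin_four_mul_esymm_two_fin_six {x : Fin 4 → R} {y : Fin 6 → R}
    (hx : ∀ i, x i ∈ L) (hy : ∀ i, y i ∈ L) :
    HasBlockSum L 4 14
      ((Finset.univ.val.map x).esymm 2 * (Finset.univ.val.map y).esymm 2) := by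
  have x_add (i j) : x i + x j ∈ L := L.add_mem (hx i) (hx j)
  have y_add (i j) : y i + y j ∈ L := L.add_mem (hy i) (hy j)
  have y_add_add (i j k) : y i + y j + y k ∈ L := L.add_mem (y_add i j) (hy k)
  have cycle₁ := mul_of_mem (x_add 0 2) (x_add 1 3)
  have cycle₂ := mul_of_mem (x_add 0 3) (x_add 1 2)
  have cycle₃ := mul_of_mem (x_add 0 1) (x_add 2 3)
  have matching₁ := (mul_of_mem (hx 0) (hx 2)).add (mul_of_mem (hx 1) (hx 3))
  have matching₂ := (mul_of_mem (hx 0) (hx 3)).add (mul_of_mem (hx 1) (hx 2))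
  have matching₃ := (mul_of_mem (hx 0) (hx 1)).add (mul_of_mem (hx 2) (hx 3))
  have C₁ := (mul_of_mem (y_add 0 5) (hy 1)).add (mul_of_mem (hy 3) (y_add_add 1 2 5))
  have C₂ := (mul_of_mem (hy 2) (y_add 1 5)).add (mul_of_mem (hy 4) (y_add 0 1))
  have C₃ := (mul_of_mem (hy 0) (y_add 3 5)).add (mul_of_mem (hy 4) (y_add 2 3))
  have C₁D := (mul_of_mem (y_add 0 3) (y_add 1 2)).add (mul_of_mem (hy 5) (y_add_add 1 3 4))
  have C₂D := mul_of_mem (y_add 2 4) (y_add_add 0 1 5)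
  have C₃D := mul_of_mem (y_add 0 4) (y_add_add 2 3 5)
  convert ((cycle₁.mul C₁).add (matching₁.mul C₁D)).add
    (((cycle₂.mul C₂).add (matching₂.mul C₂D)).add
      ((cycle₃.mul C₃).add (matching₃.mul C₃D))) using 1
  · norm_num
  · simp only [Fin.univ_val_map, List.ofFn_succ, List.ofFn_zero, ← Multiset.cons_coe,
      Multiset.coe_nil, cons_esymm_succ, zero_esymm_succ, esymm_zero, Fin.succ_zero_eq_one,
      Fin.succ_one_eq_two]
    simp only [Fin.reduceSucc]
    ring

theorem esymm_two_mul_esymm_two {M N : Multiset R} (hM : ∀ x ∈ M, x ∈ L) (hN : ∀ x ∈ N, x ∈ L)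
    {m : ℕ} (hMm : M.card ≤ m) (hNm : N.card ≤ m) :
    HasBlockSum L 4 (14 / 15 * ((m : ℝ) + 5) ^ 2) (M.esymm 2 * N.esymm 2) := by
  obtain ⟨C, hCcard, hC, hMsum⟩ :=
    exists_esymm_two_eq_sum (K := m / 3 + 1) (m := 3) hM (by omega)
  obtain ⟨D, hDcard, hD, hNsum⟩ :=
    exists_esymm_two_eq_sum (K := m / 5 + 1) (m := 5) hN (by omega)
  rw [hMsum, hNsum]
  have hCD : ∀ A ∈ C, ∀ B ∈ D, HasBlockSum L 4 14 (A.esymm 2 * B.esymm 2) := by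
    intro A hA B hB
    obtain ⟨x, hx, hAx⟩ := exists_fin_esymm_eq (hC A hA).2 (hC A hA).1
    obtain ⟨y, hy, hBy⟩ := exists_fin_esymm_eq (hD B hB).2 (hD B hB).1
    rw [hAx, hBy]
    exact esymm_two_fin_four_mul_esymm_two_fin_six hx hy
  refine (sum_mul_sum C D hCD).mono ?_
  rw [hCcard, hDcard]
  push_cast
  calc (((m / 3 : ℕ) : ℝ) + 1) * ((((m / 5 : ℕ) : ℝ) + 1) * 14)
      ≤ ((m : ℝ) / 3 + 1) * (((m : ℝ) / 5 + 1) * 14) := by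
        gcongr <;> exact Nat.cast_div_le
    _ = 14 / 15 * (((m : ℝ) + 3) * (m + 5)) := by ring
    _ ≤ 14 / 15 * ((m : ℝ) + 5) ^ 2 := by
        rw [sq]
        gcongr
        norm_num

end HasBlockSum

end CompleteGraphProducts

section Chunks

variable {R : Type*} [CommSemiring R] {L : AddSubmonoid R}

namespace HasBlockSum

theorem prod_esymm_two {m : ℕ} (C : Multiset (Multiset R))
    (hC : ∀ A ∈ C, A.card ≤ m ∧ ∀ x ∈ A, x ∈ L) :
    HasBlockSum L (2 * C.card) ((14 / 15 : ℝ) ^ (C.card / 2) * (m + 5) ^ C.card)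
      (C.map (Multiset.esymm · 2)).prod := by
  obtain ⟨l, rfl⟩ : ∃ l : List (Multiset R), (l : Multiset (Multiset R)) = C :=
    Quotient.exists_rep C
  simp only [Multiset.coe_card, Multiset.map_coe, Multiset.prod_coe, Multiset.mem_coe] at hC ⊢
  induction l using List.twoStepInduction with
  | nil => simpa using one
  | singleton A =>
    obtain ⟨hAm, hA⟩ := hC A (by simp)
    simpa using (esymm_le_pow hA hAm 2).mono (by simp)
  | cons_cons A B l ih _ =>
    simp only [List.forall_mem_cons] at hC
    obtain ⟨⟨hAm, hA⟩, ⟨hBm, hB⟩, hl⟩ := hC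
    convert (esymm_two_mul_esymm_two hA hB hAm hBm).mul (ih hl) using 1
    · simp only [List.length_cons]
      ring
    · simp only [List.length_cons, show (l.length + 1 + 1) / 2 = l.length / 2 + 1 by omega]
      ring
    · simp only [List.map_cons, List.prod_cons, mul_assoc]

theorem esymm_map_esymm_two {m : ℕ} (C : Multiset (Multiset R))
    (hC : ∀ A ∈ C, A.card ≤ m ∧ ∀ x ∈ A, x ∈ L) (d : ℕ) :
    HasBlockSum L (2 * d) (C.card.choose d * ((14 / 15 : ℝ) ^ (d / 2) * (m + 5) ^ d))
      ((C.map (Multiset.esymm · 2)).esymm d) := by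
  rw [Multiset.esymm, Multiset.powersetCard_map, Multiset.map_map, ← Multiset.card_powersetCard]
  refine multiset_sum _ fun D hD => ?_
  obtain ⟨hDC, rfl⟩ := Multiset.mem_powersetCard.1 hD
  exact prod_esymm_two D fun A hA => hC A (Multiset.mem_of_le hDC hA)

end HasBlockSum

-- The summands with `0` or `2` vertices in `A` are the only ones that matter.
theorem exists_add_esymm_even_eq {q : ℕ} (hq : 1 ≤ q) {A B : Multiset R}
    (hA : ∀ x ∈ A, x ∈ L) (hB : ∀ x ∈ B, x ∈ L) (hAq : A.card ≤ q) (hBq : B.card ≤ q ^ 2)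
    (d : ℕ) :
    ∃ p, HasBlockSum L (2 * (d + 1)) ((2 * d + 1) * (q : ℝ) ^ (2 * d)) p ∧
      (A + B).esymm (2 * (d + 1)) = B.esymm (2 * (d + 1)) + A.esymm 2 * B.esymm (2 * d) + p := by
  let negligible := ((Finset.HasAntidiagonal.antidiagonal (2 * (d + 1))).erase
    (0, 2 * (d + 1))).erase (2, 2 * d)
  refine ⟨∑ ij ∈ negligible, A.esymm ij.1 * B.esymm ij.2, ?_, ?_⟩
  · have hcard : negligible.card = 2 * d + 1 := by
      rw [Finset.card_erase_of_mem (by simp; omega), Finset.card_erase_of_mem (by simp),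
        Finset.Nat.card_antidiagonal]
      omega
    have hterm : ∀ ij ∈ negligible,
        HasBlockSum L (2 * (d + 1)) ((q : ℝ) ^ (2 * d)) (A.esymm ij.1 * B.esymm ij.2) := by
      rintro ⟨i, j⟩ hij
      simp only [negligible, Finset.mem_erase, Finset.HasAntidiagonal.mem_antidiagonal,
        ne_eq, Prod.mk.injEq] at hij
      have h := (HasBlockSum.esymm_le_pow hA hAq i).mul (HasBlockSum.esymm_le_pow hB hBq j)
      rw [hij.2.2] at h
      refine h.mono ?_
      push_cast
      rw [← pow_mul, ← pow_add]
      exact pow_le_pow_right₀ (by exact_mod_cast hq) (by omega)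
    simpa [hcard] using HasBlockSum.multiset_sum negligible.val hterm
  · rw [add_esymm, ← Finset.add_sum_erase _ _ (a := (0, 2 * (d + 1))) (by simp),
      ← Finset.add_sum_erase _ _ (a := (2, 2 * d)) (by simp; omega), esymm_zero, one_mul, add_assoc]

theorem mul_sq_mul_pow_le {k q : ℕ} (hkq : k ≤ q) (d : ℕ) :
    (q : ℝ) * ((d : ℝ) ^ 2 * k * (q : ℝ) ^ (2 * d - 2)) ≤ (d : ℝ) ^ 2 * (q : ℝ) ^ (2 * d) := by
  obtain rfl | hd := d.eq_zero_or_pos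
  · simp
  calc (q : ℝ) * ((d : ℝ) ^ 2 * k * (q : ℝ) ^ (2 * d - 2))
      ≤ (q : ℝ) * ((d : ℝ) ^ 2 * q * (q : ℝ) ^ (2 * d - 2)) := by gcongr
    _ = (d : ℝ) ^ 2 * ((q : ℝ) ^ (2 * d - 2) * (q : ℝ) ^ 2) := by ring
    _ = (d : ℝ) ^ 2 * (q : ℝ) ^ (2 * d) := by rw [← pow_add, Nat.sub_add_cancel (by omega)]

-- For `d = 0` the truncated exponent `2 * d - 2` is harmless because of the factor `d ^ 2`.
theorem exists_sum_esymm_even_eq {q : ℕ} (C : Multiset (Multiset R))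
    (hC : ∀ A ∈ C, A.card ≤ q ∧ ∀ x ∈ A, x ∈ L) (hCq : C.card ≤ q) (d : ℕ) :
    ∃ p, HasBlockSum L (2 * d) ((d : ℝ) ^ 2 * C.card * (q : ℝ) ^ (2 * d - 2)) p ∧
      C.sum.esymm (2 * d) = (C.map (Multiset.esymm · 2)).esymm d + p := by
  induction C using Multiset.induction_on generalizing d with
  | empty =>
    refine ⟨0, HasBlockSum.zero (by positivity), ?_⟩
    cases d <;> simp [esymm_zero, zero_esymm_succ, mul_add]
  | cons A C ih =>
    obtain ⟨⟨hAq, hA⟩, hC⟩ := Multiset.forall_mem_cons.1 hC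
    rw [Multiset.card_cons] at hCq
    rw [Multiset.sum_cons, Multiset.map_cons, Multiset.card_cons]
    cases d with
    | zero => exact ⟨0, HasBlockSum.zero (by positivity), by simp [esymm_zero]⟩
    | succ d =>
      have hCsum : ∀ x ∈ C.sum, x ∈ L := fun x hx =>
        let ⟨B, hB, hxB⟩ := Multiset.mem_join.1 hx
        (hC B hB).2 x hxB
      have hCcard : C.sum.card ≤ q ^ 2 := by
        rw [sq]
        exact (card_sum_le_mul C fun B hB => (hC B hB).1).trans (by gcongr; omega)
      obtain ⟨p, hp, hsplit⟩ := exists_add_esymm_even_eq (by omega) hA hCsum hAq hCcard d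
      obtain ⟨p₀, hp₀, h₀⟩ := ih hC (by omega) (d + 1)
      obtain ⟨p₂, hp₂, h₂⟩ := ih hC (by omega) d
      refine ⟨p₀ + A.esymm 2 * p₂ + p, ?_, ?_⟩
      · have hA₂ : HasBlockSum L 2 q (A.esymm 2) :=
          (HasBlockSum.esymm_le_pow hA hAq 2).mono (by simp)
        have hAp₂ := hA₂.mul hp₂
        rw [show 2 + 2 * d = 2 * (d + 1) by ring] at hAp₂
        refine ((hp₀.add hAp₂).add hp).mono ?_
        rw [show 2 * (d + 1) - 2 = 2 * d by omega]
        push_cast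
        linarith [mul_sq_mul_pow_le (show C.card ≤ q by omega) d]
      · rw [hsplit, h₀, h₂, cons_esymm_succ]
        ring

theorem HasBlockSum.esymm_even_of_card_le_sq {q : ℕ} {M : Multiset R} (hM : ∀ x ∈ M, x ∈ L)
    (hMq : M.card ≤ q ^ 2) (d : ℕ) :
    HasBlockSum L (2 * d) ((14 / 15 : ℝ) ^ (d / 2) * ((q + 5) ^ (2 * d) / d.factorial) +
      (d : ℝ) ^ 2 * (q + 5) ^ (2 * d - 1)) (M.esymm (2 * d)) := by
  obtain ⟨C, hCq, rfl, hC⟩ := exists_sum_eq_of_card_le_mul q q M (by rwa [← sq])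
  have hCL : ∀ A ∈ C, A.card ≤ q ∧ ∀ x ∈ A, x ∈ L := fun A hA =>
    ⟨hC A hA, fun x hx => hM x (Multiset.mem_join.2 ⟨A, hA, hx⟩)⟩
  obtain ⟨p, hp, hsum⟩ := exists_sum_esymm_even_eq C hCL hCq.le d
  rw [hsum]
  refine ((esymm_map_esymm_two C hCL d).add hp).mono ?_
  rw [hCq]
  have hq : (q : ℝ) ≤ q + 5 := by linarith
  gcongr ?_ + ?_
  · calc (q.choose d : ℝ) * ((14 / 15 : ℝ) ^ (d / 2) * (q + 5) ^ d)
        ≤ (q + 5) ^ d / d.factorial * ((14 / 15 : ℝ) ^ (d / 2) * (q + 5) ^ d) := by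
          gcongr
          exact (Nat.choose_le_pow_div d q).trans (by gcongr)
      _ = (14 / 15 : ℝ) ^ (d / 2) * ((q + 5) ^ (2 * d) / d.factorial) := by ring
  · obtain rfl | hd := d.eq_zero_or_pos
    · simp
    calc (d : ℝ) ^ 2 * q * q ^ (2 * d - 2) = (d : ℝ) ^ 2 * q ^ (2 * d - 1) := by
          rw [mul_assoc, ← pow_succ', show 2 * d - 2 + 1 = 2 * d - 1 by omega]
      _ ≤ (d : ℝ) ^ 2 * (q + 5) ^ (2 * d - 1) := by gcongr

end Chunks

section Asymptotics

open Filter Asymptotics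

theorem isEquivalent_sqrt_add (C : ℝ) :
    (fun n : ℕ => √(n : ℝ) + C) ~[atTop] fun n => √(n : ℝ) := by
  refine IsEquivalent.refl.add_isLittleO (isLittleO_const_left.2 (.inr ?_))
  exact tendsto_norm_atTop_atTop.comp (Real.tendsto_sqrt_atTop.comp tendsto_natCast_atTop_atTop)

theorem isEquivalent_sqrt_add_pow_div_factorial (C : ℝ) (d : ℕ) :
    (fun n : ℕ => (√(n : ℝ) + C) ^ (2 * d) / d.factorial) ~[atTop]
      fun n => (n.choose d : ℝ) := by
  refine IsEquivalent.trans ?_ (isEquivalent_choose d).symm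
  refine (((isEquivalent_sqrt_add C).pow (2 * d)).div IsEquivalent.refl).congr_right ?_
  exact .of_forall fun n => by simp [pow_mul]

theorem isLittleO_sqrt_add_pow (C : ℝ) (d : ℕ) :
    (fun n : ℕ => (d : ℝ) ^ 2 * (√(n : ℝ) + C) ^ (2 * d - 1)) =o[atTop]
      fun n => (n.choose d : ℝ) := by
  obtain rfl | hd := d.eq_zero_or_pos
  · simp
  have htendsto : Tendsto (fun n : ℕ => √(n : ℝ) + C) atTop atTop :=
    tendsto_atTop_add_const_right _ C (Real.tendsto_sqrt_atTop.comp tendsto_natCast_atTop_atTop)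
  have hpow : (fun n : ℕ => (√(n : ℝ) + C) ^ (2 * d - 1)) =o[atTop]
      fun n => (√(n : ℝ) + C) ^ (2 * d) / d.factorial := by
    simp only [div_eq_inv_mul]
    exact ((isLittleO_pow_pow_atTop_of_lt (by omega)).comp_tendsto htendsto).const_mul_right
      (by positivity)
  exact (hpow.const_mul_left _).trans_isBigO (isEquivalent_sqrt_add_pow_div_factorial C d).isBigO

theorem eventually_sqrt_add_pow_le (C : ℝ) {c : ℝ} (hc : 0 < c) (d : ℕ) {ε : ℝ} (hε : 0 < ε) :
    ∀ᶠ n : ℕ in atTop, c * ((√(n : ℝ) + C) ^ (2 * d) / d.factorial) +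
      (d : ℝ) ^ 2 * (√(n : ℝ) + C) ^ (2 * d - 1) ≤ c * (1 + ε) * n.choose d := by
  have hmain := isEquivalent_sqrt_add_pow_div_factorial C d
  have hequiv := ((IsEquivalent.refl (u := fun _ : ℕ => c)).mul hmain).add_isLittleO
    ((isLittleO_sqrt_add_pow C d).const_mul_right hc.ne')
  filter_upwards [hequiv.isLittleO.def hε] with n hn
  have hle := (le_abs_self _).trans hn
  simp only [Pi.sub_apply, Pi.mul_apply, Pi.add_apply, Real.norm_eq_abs, abs_mul, abs_of_pos hc,
    Nat.abs_cast] at hle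
  linarith

theorem HasBlockSum.exists_esymm_even_le (d : ℕ) {ε : ℝ} (hε : 0 < ε) :
    ∃ N : ℕ, ∀ {R : Type*} [CommSemiring R] {L : AddSubmonoid R} (M : Multiset R),
      (∀ x ∈ M, x ∈ L) → N ≤ M.card →
        HasBlockSum L (2 * d) ((14 / 15 : ℝ) ^ (d / 2) * (1 + ε) * M.card.choose d)
          (M.esymm (2 * d)) := by
  obtain ⟨N, hN⟩ := eventually_atTop.1
    (eventually_sqrt_add_pow_le 6 (c := (14 / 15) ^ (d / 2)) (by positivity) d hε)
  refine ⟨N, fun M hM hNM => (esymm_even_of_card_le_sq (q := Nat.sqrt M.card + 1) hM ?_ d).mono <|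
    le_trans ?_ (hN _ hNM)⟩
  · exact (Nat.lt_succ_sqrt' M.card).le
  · have hsqrt : ((M.card.sqrt + 1 : ℕ) : ℝ) + 5 ≤ √(M.card : ℝ) + 6 := by
      push_cast
      linarith [Real.nat_sqrt_le_real_sqrt (a := M.card)]
    gcongr

end Asymptotics

section Blocks

theorem Block.eq_of_mem_parts {V : Finset ℕ} {r : ℕ} (B : Block V r) {i j : Fin r} {v : ℕ}
    (hi : v ∈ B.parts i) (hj : v ∈ B.parts j) : i = j :=
  by_contra fun hij => Finset.disjoint_left.1 (B.disj i j hij) hi hj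

theorem Block.mem_edges_iff {V : Finset ℕ} {r : ℕ} (B : Block V r) (Y : Finset ℕ) :
    Y ∈ B.edges ↔ ∃ c : Fin r → ℕ, (∀ i, c i ∈ B.parts i) ∧ Finset.univ.val.map c = Y.val := by
  constructor
  · rintro ⟨hcard, hcover⟩
    choose c hc using fun i => Finset.card_eq_one.1 (hcard i)
    have hmem : ∀ {i v}, v ∈ Y ∧ v ∈ B.parts i ↔ v = c i := fun {i v} => by
      rw [← Finset.mem_inter, hc, Finset.mem_singleton]
    have hinj : Function.Injective c := fun i j hij =>
      B.eq_of_mem_parts (hmem.2 rfl).2 (hij ▸ (hmem.2 rfl).2)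
    refine ⟨c, fun i => (hmem.2 rfl).2, ?_⟩
    suffices Finset.univ.map ⟨c, hinj⟩ = Y by
      rw [← this, Finset.map_val, Function.Embedding.coeFn_mk]
    ext v
    simp only [Finset.mem_map, Finset.mem_univ, true_and, Function.Embedding.coeFn_mk]
    refine ⟨fun ⟨i, hi⟩ => hi ▸ (hmem.2 rfl).1, fun hv => ?_⟩
    obtain ⟨i, hi⟩ := hcover v hv
    exact ⟨i, (hmem.1 ⟨hv, hi⟩).symm⟩
  · rintro ⟨c, hc, hcY⟩
    have hmem : ∀ v, v ∈ Y ↔ ∃ i, c i = v := fun v => by simp [← Finset.mem_val, ← hcY]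
    refine ⟨fun i => Finset.card_eq_one.2 ⟨c i, ?_⟩, fun v hv => ?_⟩
    · ext v
      rw [Finset.mem_inter, Finset.mem_singleton, hmem]
      constructor
      · rintro ⟨⟨j, rfl⟩, hj⟩
        rw [B.eq_of_mem_parts (hc j) hj]
      · rintro rfl
        exact ⟨⟨i, rfl⟩, hc i⟩
    · obtain ⟨i, rfl⟩ := (hmem v).1 hv
      exact ⟨i, hc i⟩

theorem ExactCover.empty (V : Finset ℕ) (r : ℕ) : ExactCover V r 0 ∅ :=
  ⟨Fin.elim0, fun i => i.elim0, by simp⟩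

theorem ExactCover.insert {V : Finset ℕ} {r k : ℕ} {F : Set (Finset ℕ)} (h : ExactCover V r k F)
    (B : Block V r) (hB : Disjoint B.edges F) : ExactCover V r (k + 1) (B.edges ∪ F) := by
  obtain ⟨C, hC, rfl⟩ := h
  rw [Set.disjoint_iUnion_right] at hB
  refine ⟨Fin.cons B C, fun i j hij => ?_, ?_⟩
  · cases i using Fin.cases <;> cases j using Fin.cases
    · exact absurd rfl hij
    · exact hB _
    · exact (hB _).symm
    · exact hC _ _ fun h => hij (congrArg Fin.succ h)
  · ext Y
    simp [Fin.exists_fin_succ]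

theorem pairwise_disjoint_of_forall_injective {ι α : Type*} {P : ι → Finset α}
    (hP : ∀ i, (P i).Nonempty)
    (hinj : ∀ c : ι → α, (∀ i, c i ∈ P i) → Function.Injective c) {i j : ι} (hij : i ≠ j) :
    Disjoint (P i) (P j) := by
  classical
  choose c hc using hP
  refine Finset.disjoint_left.2 fun v hvi hvj => hij ?_
  refine hinj (Function.update (Function.update c i v) j v) (fun l => ?_) ?_
  · obtain rfl | hlj := eq_or_ne l j
    · simpa using hvj
    · obtain rfl | hli := eq_or_ne l i
      · simpa [hlj] using hvi
      · simpa [hlj, hli] using hc l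
  · simp [Function.update_of_ne hij]

end Blocks

section Translation

open MvPolynomial

/-- The generating polynomial of a finite family of finite sets of vertices. -/
noncomputable def edgePolynomial (F : Finset (Finset ℕ)) : MvPolynomial ℕ ℕ :=
  ∑ Y ∈ F, ∏ v ∈ Y, X v

/-- The linear forms in the variables `X v` with `v ∈ W`; a nonzero one stands for its set of
variables, a nonempty subset of `W`. -/
noncomputable def linearForms (W : Finset ℕ) : AddSubmonoid (MvPolynomial ℕ ℕ) :=
  (Submodule.span ℕ (X '' (W : Set ℕ))).toAddSubmonoid

theorem mem_linearForms_of_mem_map_X {U W : Finset ℕ} (h : U ⊆ W) :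
    ∀ x ∈ U.val.map X, x ∈ linearForms W :=
  Multiset.forall_mem_map_iff.2 fun _ hv =>
    Submodule.subset_span (Set.mem_image_of_mem X (Finset.mem_coe.2 (h hv)))

theorem exists_linearCombination_eq {W : Finset ℕ} {p : MvPolynomial ℕ ℕ}
    (hp : p ∈ linearForms W) :
    ∃ l : ℕ →₀ ℕ, l.support ⊆ W ∧ Finsupp.linearCombination ℕ X l = p := by
  obtain ⟨l, hl, hlp⟩ := (Finsupp.mem_span_image_iff_linearCombination ℕ).1 hp
  exact ⟨l, by simpa [Finsupp.mem_supported] using hl, hlp⟩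

theorem prod_map_X (s : Multiset ℕ) :
    (s.map X).prod = (monomial s.toFinsupp 1 : MvPolynomial ℕ ℕ) := by
  induction s using Multiset.induction_on with
  | empty => simp
  | cons v s ih =>
    rw [Multiset.map_cons, Multiset.prod_cons, ih, ← Multiset.singleton_add, map_add,
      Multiset.toFinsupp_singleton, X, monomial_mul, one_mul]

theorem coeff_prod_linearCombination_ne_zero_iff {r : ℕ} (l : Fin r → ℕ →₀ ℕ) (s : Multiset ℕ) :
    coeff s.toFinsupp (∏ i, Finsupp.linearCombination ℕ X (l i)) ≠ 0 ↔
      ∃ c : Fin r → ℕ, (∀ i, c i ∈ (l i).support) ∧ Finset.univ.val.map c = s := by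
  simp only [Finsupp.linearCombination_apply, Finsupp.sum, Finset.prod_univ_sum, Finset.prod_smul,
    coeff_sum, ne_eq, Finset.sum_eq_zero_iff, Fintype.mem_piFinset, not_forall, exists_prop]
  refine exists_congr fun c => and_congr_right fun hc => ?_
  have hprod : ∏ i, X (c i) = monomial (Finset.univ.val.map c).toFinsupp 1 := by
    rw [← prod_map_X, Multiset.map_map]
    rfl
  have hcoeff : ∏ i, l i (c i) ≠ 0 :=
    Finset.prod_ne_zero_iff.2 fun i _ => Finsupp.mem_support_iff.1 (hc i)
  rw [hprod, coeff_smul, coeff_monomial]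
  simp [hcoeff]

theorem coeff_edgePolynomial (F : Finset (Finset ℕ)) (s : Multiset ℕ) :
    coeff s.toFinsupp (edgePolynomial F) = if s ∈ F.image Finset.val then 1 else 0 := by
  have hterm : ∀ Y : Finset ℕ, coeff s.toFinsupp (∏ v ∈ Y, X v : MvPolynomial ℕ ℕ) =
      if Y.val = s then 1 else 0 := fun Y => by
    rw [Finset.prod, prod_map_X, coeff_monomial]
    simp only [Multiset.toFinsupp.injective.eq_iff]
  simp only [edgePolynomial, coeff_sum, hterm]
  split_ifs with hs
  · obtain ⟨Y, hY, rfl⟩ := Finset.mem_image.1 hs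
    simp [hY]
  · exact Finset.sum_eq_zero fun Y hY => if_neg fun h => hs (Finset.mem_image.2 ⟨Y, hY, h⟩)

theorem coeff_edgePolynomial_ne_zero_iff (F : Finset (Finset ℕ)) (s : Multiset ℕ) :
    coeff s.toFinsupp (edgePolynomial F) ≠ 0 ↔ ∃ Y ∈ F, Y.val = s := by
  simp [coeff_edgePolynomial]

theorem edgePolynomial_union {F F' : Finset (Finset ℕ)} (h : Disjoint F F') :
    edgePolynomial (F ∪ F') = edgePolynomial F + edgePolynomial F' :=
  Finset.sum_union h

theorem exists_edgePolynomial_eq_of_add_eq {p q : MvPolynomial ℕ ℕ} {F : Finset (Finset ℕ)}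
    (h : p + q = edgePolynomial F) :
    ∃ F₁ F₂, Disjoint F₁ F₂ ∧ F₁ ∪ F₂ = F ∧ p = edgePolynomial F₁ ∧ q = edgePolynomial F₂ := by
  let F₁ := F.filter fun Y => coeff Y.val.toFinsupp p ≠ 0
  let F₂ := F.filter fun Y => ¬ coeff Y.val.toFinsupp p ≠ 0
  have hp : p = edgePolynomial F₁ := by
    ext m
    obtain ⟨s, rfl⟩ := Multiset.toFinsupp.surjective m
    have hs := congrArg (coeff s.toFinsupp) h
    rw [coeff_add, coeff_edgePolynomial] at hs
    rw [coeff_edgePolynomial]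
    by_cases hsp : coeff s.toFinsupp p = 0
    · rw [hsp, if_neg]
      intro hsF₁
      obtain ⟨Y, hY, rfl⟩ := Finset.mem_image.1 hsF₁
      exact (Finset.mem_filter.1 hY).2 hsp
    · obtain ⟨Y, hY, rfl⟩ := Finset.mem_image.1 (by_contra fun hsF => by
        rw [if_neg hsF] at hs
        omega : s ∈ F.image Finset.val)
      rw [if_pos (Finset.mem_image_of_mem _ hY)] at hs
      rw [if_pos (Finset.mem_image_of_mem _ (Finset.mem_filter.2 ⟨hY, hsp⟩))]
      omega
  have hF : edgePolynomial F₁ + edgePolynomial F₂ = edgePolynomial F :=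
    Finset.sum_filter_add_sum_filter_not F _ _
  exact ⟨F₁, F₂, Finset.disjoint_filter_filter_not F F _, Finset.filter_union_filter_not_eq _ F, hp,
    add_left_cancel (a := p) (by rw [h, ← hF, ← hp])⟩

theorem exists_block_edges_eq {W : Finset ℕ} {r : ℕ} {t : Multiset (MvPolynomial ℕ ℕ)}
    (ht : t.card = r) (htW : ∀ x ∈ t, x ∈ linearForms W) {F : Finset (Finset ℕ)}
    (hF : F.Nonempty) (h : t.prod = edgePolynomial F) : ∃ B : Block W r, B.edges = F := by
  obtain ⟨g, rfl⟩ := exists_eq_map_univ_fin t ht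
  choose l hlW hl using fun i =>
    exists_linearCombination_eq (htW (g i) (Multiset.mem_map_of_mem g (Finset.mem_univ i)))
  have htransversal : ∀ s, (∃ c : Fin r → ℕ, (∀ i, c i ∈ (l i).support) ∧
      Finset.univ.val.map c = s) ↔ ∃ Y ∈ F, Y.val = s := fun s => by
    rw [← coeff_prod_linearCombination_ne_zero_iff, ← coeff_edgePolynomial_ne_zero_iff, ← h]
    simp only [hl]
    rfl
  have hinj : ∀ c : Fin r → ℕ, (∀ i, c i ∈ (l i).support) → Function.Injective c := by
    intro c hc
    obtain ⟨Y, -, hY⟩ := (htransversal _).1 ⟨c, hc, rfl⟩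
    have hnodup : (Finset.univ.val.map c).Nodup := hY ▸ Y.nodup
    exact fun i j hij =>
      Multiset.inj_on_of_nodup_map hnodup i (Finset.mem_univ i) j (Finset.mem_univ j) hij
  have hnonempty : ∀ i, (l i).support.Nonempty := by
    obtain ⟨Y, hY⟩ := hF
    obtain ⟨c, hc, -⟩ := (htransversal Y.val).2 ⟨Y, hY, rfl⟩
    exact fun i => ⟨c i, hc i⟩
  refine ⟨⟨fun i => (l i).support, hnonempty, hlW,
    fun i j hij => pairwise_disjoint_of_forall_injective hnonempty hinj hij⟩, ?_⟩
  ext Y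
  rw [Block.mem_edges_iff, htransversal]
  simp [Finset.val_inj]

theorem HasBlockSum.exists_exactCover {W : Finset ℕ} {r : ℕ} {c : ℝ} {F : Finset (Finset ℕ)}
    (h : HasBlockSum (linearForms W) r c (edgePolynomial F)) :
    ∃ k : ℕ, ExactCover W r k F ∧ (k : ℝ) ≤ c := by
  obtain ⟨s, hsc, hs, hsum⟩ := h
  suffices ∃ k ≤ s.card, ExactCover W r k F by
    obtain ⟨k, hk, hcover⟩ := this
    exact ⟨k, hcover, le_trans (by exact_mod_cast hk) hsc⟩
  clear hsc
  induction s using Multiset.induction_on generalizing F with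
  | empty =>
    obtain rfl : F = ∅ := by
      refine Finset.eq_empty_of_forall_notMem fun Y hY => ?_
      refine (coeff_edgePolynomial_ne_zero_iff F Y.val).2 ⟨Y, hY, rfl⟩ ?_
      simp [hsum]
    exact ⟨0, le_rfl, by simpa using ExactCover.empty W r⟩
  | cons t s ih =>
    rw [Multiset.map_cons, Multiset.sum_cons] at hsum
    obtain ⟨ht, hs⟩ := Multiset.forall_mem_cons.1 hs
    obtain ⟨F₁, F₂, hdisj, rfl, hF₁, hF₂⟩ := exists_edgePolynomial_eq_of_add_eq hsum.symm
    obtain ⟨k, hk, hcover⟩ := ih hs hF₂.symm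
    rw [Multiset.card_cons]
    obtain rfl | hne := F₁.eq_empty_or_nonempty
    · exact ⟨k, by omega, by simpa using hcover⟩
    · obtain ⟨B, hB⟩ := exists_block_edges_eq ht.1 ht.2 hne hF₁
      refine ⟨k + 1, by omega, ?_⟩
      rw [Finset.coe_union, ← hB]
      exact hcover.insert B (by rw [hB]; exact_mod_cast hdisj)

end Translation

section MixedFamilies

open MvPolynomial

/-- The family `(S choose a) × (T choose b)`. -/
def mixedEdges (S T : Finset ℕ) (a b : ℕ) : Finset (Finset ℕ) :=
  (S ∪ T).powerset.filter fun Y => (Y ∩ S).card = a ∧ (Y ∩ T).card = b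

theorem edgePolynomial_mixedEdges {S T : Finset ℕ} (hST : Disjoint S T) (a b : ℕ) :
    edgePolynomial (mixedEdges S T a b) = (S.val.map X).esymm a * (T.val.map X).esymm b := by
  rw [Finset.esymm_map_val, Finset.esymm_map_val, Finset.sum_mul_sum, ← Finset.sum_product']
  have inter_S {A B : Finset ℕ} (hA : A ⊆ S) (hB : B ⊆ T) : (A ∪ B) ∩ S = A := by
    rw [Finset.union_inter_distrib_right, Finset.inter_eq_left.2 hA,
      Finset.disjoint_iff_inter_eq_empty.1 (hST.symm.mono_left hB), Finset.union_empty]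
  have inter_T {A B : Finset ℕ} (hA : A ⊆ S) (hB : B ⊆ T) : (A ∪ B) ∩ T = B := by
    rw [Finset.union_inter_distrib_right, Finset.inter_eq_left.2 hB,
      Finset.disjoint_iff_inter_eq_empty.1 (hST.mono_left hA), Finset.empty_union]
  have inter_union_inter {Y : Finset ℕ} (hY : Y ∈ mixedEdges S T a b) : Y ∩ S ∪ Y ∩ T = Y := by
    rw [← Finset.inter_union_distrib_left, Finset.inter_eq_left]
    exact Finset.mem_powerset.1 (Finset.mem_filter.1 hY).1
  refine Finset.sum_nbij' (fun Y => (Y ∩ S, Y ∩ T)) (fun AB => AB.1 ∪ AB.2) ?_ ?_ ?_ ?_ ?_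
  · intro Y hY
    simp [(Finset.mem_filter.1 hY).2]
  · rintro ⟨A, B⟩ hAB
    simp only [Finset.mem_product, Finset.mem_powersetCard] at hAB
    obtain ⟨⟨hA, rfl⟩, hB, rfl⟩ := hAB
    rw [mixedEdges, Finset.mem_filter, Finset.mem_powerset, inter_S hA hB, inter_T hA hB]
    exact ⟨Finset.union_subset_union hA hB, rfl, rfl⟩
  · exact fun Y hY => inter_union_inter hY
  · rintro ⟨A, B⟩ hAB
    simp only [Finset.mem_product, Finset.mem_powersetCard] at hAB
    rw [inter_S hAB.1.1 hAB.2.1, inter_T hAB.1.1 hAB.2.1]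
  · intro Y hY
    rw [← Finset.prod_union (hST.mono Finset.inter_subset_right Finset.inter_subset_right),
      inter_union_inter hY]

theorem disjoint_mixedEdges {S T : Finset ℕ} {a a' b b' : ℕ} (h : a ≠ a') :
    Disjoint (mixedEdges S T a b) (mixedEdges S T a' b') :=
  Finset.disjoint_filter.2 fun _ _ hY hY' => h (hY.1.symm.trans hY'.1)

theorem coe_mixedEdges_union (S T : Finset ℕ) (a a' b b' : ℕ) :
    ((mixedEdges S T a b ∪ mixedEdges S T a' b' : Finset (Finset ℕ)) : Set (Finset ℕ)) =
      {Y | Y ⊆ S ∪ T ∧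
        (((Y ∩ S).card = a ∧ (Y ∩ T).card = b) ∨ ((Y ∩ S).card = a' ∧ (Y ∩ T).card = b'))} := by
  ext Y
  simp only [mixedEdges, Finset.coe_union, Finset.coe_filter, Finset.mem_powerset, Set.mem_union,
    Set.mem_ofPred_eq, and_or_left]

theorem cover_mixed_family_asymptotic_general (a b : ℕ) (hae : Even a) (hbe : Even b)
    (ε : ℝ) (hε : 0 < ε) :
    ∃ N : ℕ, ∀ S T : Finset ℕ, Disjoint S T → N ≤ S.card → N ≤ T.card →
      ∃ k : ℕ,
        ExactCover (S ∪ T) (a + b + 1) k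
          {X | X ⊆ S ∪ T ∧
            (((X ∩ S).card = a ∧ (X ∩ T).card = b + 1) ∨
             ((X ∩ S).card = a + 1 ∧ (X ∩ T).card = b))} ∧
        (k : ℝ) ≤ (((14 : ℝ) / 15) ^ (b / 4) + ((14 : ℝ) / 15) ^ (a / 4))
          * (1 + ε) * (S.card.choose (a / 2)) * (T.card.choose (b / 2)) := by
  obtain ⟨a, rfl⟩ := even_iff_exists_two_mul.1 hae
  obtain ⟨b, rfl⟩ := even_iff_exists_two_mul.1 hbe
  obtain ⟨N₁, hN₁⟩ := HasBlockSum.exists_esymm_even_le a hε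
  obtain ⟨N₂, hN₂⟩ := HasBlockSum.exists_esymm_even_le b hε
  refine ⟨max N₁ N₂, fun S T hST hS hT => ?_⟩
  have hSL := mem_linearForms_of_mem_map_X (Finset.subset_union_left (s₁ := S) (s₂ := T))
  have hTL := mem_linearForms_of_mem_map_X (Finset.subset_union_right (s₁ := S) (s₂ := T))
  have hSeven := hN₁ _ hSL (by simpa using le_of_max_le_left hS)
  have hTeven := hN₂ _ hTL (by simpa using le_of_max_le_right hT)
  have hleft := hSeven.mul (HasBlockSum.esymm_odd _ hTL b)
  have hright := (HasBlockSum.esymm_odd _ hSL a).mul hTeven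
  rw [← edgePolynomial_mixedEdges hST] at hleft hright
  rw [show 2 * a + 1 + 2 * b = 2 * a + (2 * b + 1) by ring] at hright
  have hunion := hleft.add hright
  rw [← edgePolynomial_union (disjoint_mixedEdges (Nat.ne_add_one (2 * a)))] at hunion
  obtain ⟨k, hk, hkc⟩ := hunion.exists_exactCover
  refine ⟨k, coe_mixedEdges_union S T .. ▸ hk, hkc.trans_eq ?_⟩
  simp only [Multiset.card_map, Finset.card_val, show 2 * a / 2 = a by omega,
    show 2 * b / 2 = b by omega, show 2 * a / 4 = a / 2 by omega, show 2 * b / 4 = b / 2 by omega]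
  ring

end MixedFamilies

theorem pow_div_four_le_rpow_div_six {x : ℝ} (hx₀ : 0 < x) (hx₁ : x ≤ 1) {n : ℕ} (hn : Even n)
    (h : 6 ≤ n) : x ^ (n / 4) ≤ x ^ ((n : ℝ) / 6) := by
  rw [← Real.rpow_natCast]
  refine Real.rpow_le_rpow_of_exponent_ge hx₀ hx₁ ?_
  rw [div_le_iff₀ (by norm_num)]
  obtain ⟨m, rfl⟩ := hn
  exact_mod_cast (by omega : m + m ≤ (m + m) / 4 * 6)

theorem cover_mixed_family_asymptotic (a b : ℕ) (hae : Even a) (hbe : Even b)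
    (ha : 6 ≤ a) (hb : 6 ≤ b) (ε : ℝ) (hε : 0 < ε) :
    ∃ N : ℕ, ∀ S T : Finset ℕ, Disjoint S T → N ≤ S.card → N ≤ T.card →
      ∃ k : ℕ,
        ExactCover (S ∪ T) (a + b + 1) k
          {X | X ⊆ S ∪ T ∧
            (((X ∩ S).card = a ∧ (X ∩ T).card = b + 1) ∨
             ((X ∩ S).card = a + 1 ∧ (X ∩ T).card = b))} ∧
        (k : ℝ) ≤ (((14 : ℝ) / 15) ^ ((b : ℝ) / 6) + ((14 : ℝ) / 15) ^ ((a : ℝ) / 6))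
          * (1 + ε) * (S.card.choose (a / 2)) * (T.card.choose (b / 2)) := by
  obtain ⟨N, hN⟩ := cover_mixed_family_asymptotic_general a b hae hbe ε hε
  refine ⟨N, fun S T hST hS hT => (hN S T hST hS hT).imp fun k hk => ⟨hk.1, hk.2.trans ?_⟩⟩
  gcongr <;> exact pow_div_four_le_rpow_div_six (by norm_num) (by norm_num) ‹_› ‹_›
end

section
/- Let r = 4d + 1 with d ≥ 1 an integer, and let 0 ≤ α < 1. Suppose that for every ε > 0 there exists N such that for all even n ≥ N and every partition of [n] into two disjoint sets S and T of size n/2 each, the family ((S choose ⌊r/2⌋) × (T choose ⌈r/2⌉)) ∪ ((S choose ⌈r/2⌉) × (T choose ⌊r/2⌋)) can be exactly covered using at most α · (1 + ε) · C(n/2, ⌊r/4⌋)² complete r-partite r-graphs. Then there is a constant c_r(α) < 1, namely c_r(α) = 1 − (1 − α)/e^(r/2), such that for every ε > 0 there exists M with f_r(n) ≤ c_r(α) · (1 + ε) · C(n, ⌊r/2⌋) for all n ≥ M, where C(n, k) denotes the binomial coefficient. -/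
/-!
For a set `E` of `k` vertices, the `(2 * k + 1)`-sets `X` whose elements of odd rank form `E` are
the edges of a single block: its parts are the `k` points of `E` and the `k + 1` gaps between them.
With `k = 2 * d` this gives the classical cover by `n.choose (2 * d)` blocks.

Split `[n]` into an initial segment `S` of length `m` and the rest `T`. The number of odd-rank
elements of `X` lying in `S` is half the size of `X ∩ S`, rounded down. Hence `X` is balanced
between `S` and `T` exactly when `d` of its `2 * d` elements of odd rank lie in `S`, so the
balanced sets take up exactly `m.choose d * (n - m).choose d` blocks of the classical cover. For
`n = 2 * m` these can be exchanged for about `α * m.choose d ^ 2` blocks, and since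
`m.choose d ^ 2 / (2 * m).choose (2 * d)` tends to `d.centralBinom / 4 ^ d`, which exceeds
`exp (-(2 * d + 1 / 2))`, the bound follows for even `n`. For odd `n`, restrict a cover of
`[n + 1]`.
-/

open Finset

section OddRanked

/-- The elements of `X` whose rank in `X` is odd, ranks being counted from `0`: for
`X = {x₀ < x₁ < x₂ < ⋯}` these are `x₁, x₃, …`. -/
def oddRanked (X : Finset ℕ) : Finset ℕ := {x ∈ X | Odd (Nat.count (· ∈ X) x)}

/-- The position of `x` relative to `E = {e₁ < ⋯ < eₖ}`: the points `eᵢ` and the gaps between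
them are numbered alternately from left to right, so that `eᵢ` has index `2 * i - 1` and the gap
after it has index `2 * i`. -/
def gapIndex (E : Finset ℕ) (x : ℕ) : ℕ := Nat.count (· ∈ E) x + Nat.count (· ∈ E) (x + 1)

variable {E X : Finset ℕ} {x : ℕ}

lemma count_mem_eq_card_inter_range (X : Finset ℕ) (t : ℕ) :
    Nat.count (· ∈ X) t = #(X ∩ range t) := by
  rw [Nat.count_eq_card_filter_range, filter_mem_eq_inter, inter_comm]

lemma count_mem_oddRanked (X : Finset ℕ) (t : ℕ) :
    Nat.count (· ∈ oddRanked X) t = Nat.count (· ∈ X) t / 2 := by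
  induction t with
  | zero => simp
  | succ t ih => grind [oddRanked]

lemma card_oddRanked (X : Finset ℕ) : #(oddRanked X) = #X / 2 := by
  obtain ⟨n, hn⟩ := X.exists_nat_subset_range
  have h := count_mem_oddRanked X n
  rwa [count_mem_eq_card_inter_range, count_mem_eq_card_inter_range, inter_eq_left.2 hn,
    inter_eq_left.2 (show oddRanked X ⊆ range n from (filter_subset _ _).trans hn)] at h

lemma bijOn_count_mem (X : Finset ℕ) : Set.BijOn (Nat.count (· ∈ X)) X (Set.Iio #X) := by
  have hmaps : Set.MapsTo (Nat.count (· ∈ X)) X (range #X) := fun x hx => by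
    simpa using Nat.count_lt_card X.finite_toSet hx
  have hinj : Set.InjOn (Nat.count (· ∈ X)) X := fun x hx y hy => Nat.count_injective hx hy
  simpa using Set.BijOn.mk hmaps hinj (surjOn_of_injOn_of_card_le _ hmaps hinj (by simp))

lemma card_eq_of_bijOn_Iio {c : ℕ → ℕ} {n : ℕ} (h : Set.BijOn c X (Set.Iio n)) : #X = n := by
  rw [← coe_range] at h
  simpa using card_nbij c h.mapsTo h.injOn h.surjOn

lemma count_mem_eq_of_bijOn_Iio {c : ℕ → ℕ} {n : ℕ} (hc : Monotone c)
    (h : Set.BijOn c X (Set.Iio n)) (hx : x ∈ X) : Nat.count (· ∈ X) x = c x := by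
  have hbij : Set.BijOn c ↑(X ∩ range x) (Set.Iio (c x)) := by
    simp only [coe_inter, coe_range]
    refine ⟨fun y hy => ?_, h.injOn.mono Set.inter_subset_left, fun i hi => ?_⟩
    · exact (hc hy.2.le).lt_of_ne fun heq => hy.2.ne (h.injOn hy.1 hx heq)
    · obtain ⟨y, hy, rfl⟩ := h.surjOn (Set.mem_Iio.2 (lt_trans hi (h.mapsTo hx)))
      exact ⟨y, ⟨hy, hc.reflect_lt hi⟩, rfl⟩
  rw [count_mem_eq_card_inter_range, card_eq_of_bijOn_Iio hbij]

lemma gapIndex_eq (E : Finset ℕ) (x : ℕ) :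
    gapIndex E x = 2 * Nat.count (· ∈ E) x + if x ∈ E then 1 else 0 := by
  rw [gapIndex, Nat.count_succ]
  ring

lemma odd_gapIndex_iff : Odd (gapIndex E x) ↔ x ∈ E := by
  rw [gapIndex_eq]
  split_ifs with h <;> simp [h]

lemma monotone_gapIndex (E : Finset ℕ) : Monotone (gapIndex E) := fun _ _ hxy =>
  Nat.add_le_add (Nat.count_monotone _ hxy) (Nat.count_monotone _ (Nat.succ_le_succ hxy))

lemma gapIndex_oddRanked (hx : x ∈ X) : gapIndex (oddRanked X) x = Nat.count (· ∈ X) x := by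
  rw [gapIndex_eq, count_mem_oddRanked]
  grind [oddRanked]

lemma bijOn_gapIndex_iff :
    Set.BijOn (gapIndex E) X (Set.Iio (2 * #E + 1)) ↔ #X = 2 * #E + 1 ∧ oddRanked X = E := by
  constructor
  · intro h
    have hX := card_eq_of_bijOn_Iio h
    refine ⟨hX, eq_of_subset_of_card_le (fun x hx => ?_) (by rw [card_oddRanked, hX]; omega)⟩
    obtain ⟨hxX, hodd⟩ := mem_filter.1 hx
    rwa [count_mem_eq_of_bijOn_Iio (monotone_gapIndex E) h hxX, odd_gapIndex_iff] at hodd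
  · rintro ⟨hX, rfl⟩
    exact hX ▸ (bijOn_count_mem X).congr fun x hx => (gapIndex_oddRanked hx).symm

end OddRanked

section Transversals

variable {V : Finset ℕ} {r : ℕ}

/-- The sets consisting of exactly one vertex from each of the given parts. For disjoint nonempty
parts these are the edges of a block; here empty parts are allowed, and then there are none. -/
def transversals (p : Fin r → Finset ℕ) : Set (Finset ℕ) :=
  {X | (∀ i, #(X ∩ p i) = 1) ∧ ∀ x ∈ X, ∃ i, x ∈ p i}

lemma nonempty_of_mem_transversals {p : Fin r → Finset ℕ} {X : Finset ℕ}
    (hX : X ∈ transversals p) (i : Fin r) : (p i).Nonempty :=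
  (card_pos.1 (hX.1 i ▸ one_pos)).mono inter_subset_right

lemma transversals_inter (p : Fin r → Finset ℕ) (W : Finset ℕ) :
    transversals (fun i => p i ∩ W) = {X ∈ transversals p | X ⊆ W} := by
  ext X
  constructor
  · rintro ⟨hone, hcov⟩
    have hXW : X ⊆ W := fun x hx => (hcov x hx).elim fun _ hi => (mem_inter.1 hi).2
    refine ⟨⟨fun i => ?_, fun x hx => (hcov x hx).imp fun _ hi => (mem_inter.1 hi).1⟩, hXW⟩
    rw [← hone i, inter_left_comm, inter_eq_left.2 hXW, inter_comm]
  · rintro ⟨⟨hone, hcov⟩, hXW⟩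
    refine ⟨fun i => ?_, fun x hx => (hcov x hx).imp fun _ hi => mem_inter.2 ⟨hi, hXW hx⟩⟩
    rw [inter_left_comm, inter_eq_left.2 hXW, inter_comm, hone]

lemma transversals_fibers (V : Finset ℕ) (c : ℕ → ℕ) :
    transversals (fun i : Fin r => {x ∈ V | c x = i}) =
      {X | X ⊆ V ∧ Set.BijOn c X (Set.Iio r)} := by
  ext X
  constructor
  · rintro ⟨hone, hcov⟩
    have hXV : X ⊆ V := fun x hx => (hcov x hx).elim fun _ hi => (mem_filter.1 hi).1
    refine ⟨hXV, fun x hx => ?_, fun x hx y hy hxy => ?_, fun i hi => ?_⟩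
    · obtain ⟨i, hi⟩ := hcov x hx
      exact (mem_filter.1 hi).2 ▸ i.2
    · obtain ⟨i, hi⟩ := hcov x hx
      have hyi : y ∈ {x ∈ V | c x = i} := mem_filter.2 ⟨hXV hy, hxy ▸ (mem_filter.1 hi).2⟩
      exact card_le_one.1 (hone i).le x (mem_inter.2 ⟨hx, hi⟩) y (mem_inter.2 ⟨hy, hyi⟩)
    · obtain ⟨x, hx⟩ := card_pos.1 (hone ⟨i, hi⟩ ▸ one_pos)
      exact ⟨x, (mem_inter.1 hx).1, (mem_filter.1 (mem_inter.1 hx).2).2⟩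
  · rintro ⟨hXV, hc⟩
    refine ⟨fun i => ?_, fun x hx => ⟨⟨c x, hc.mapsTo hx⟩, mem_filter.2 ⟨hXV hx, rfl⟩⟩⟩
    obtain ⟨x, hx, hxi⟩ := hc.surjOn i.2
    refine card_eq_one.2 ⟨x, eq_singleton_iff_unique_mem.2 ⟨?_, fun y hy => ?_⟩⟩
    · exact mem_inter.2 ⟨hx, mem_filter.2 ⟨hXV hx, hxi⟩⟩
    · obtain ⟨hyX, hyV⟩ := mem_inter.1 hy
      exact hc.injOn hyX hx ((mem_filter.1 hyV).2.trans hxi.symm)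

lemma exactCover_iUnion_edges {ι : Type*} [Fintype ι] (B : ι → Block V r)
    (hB : Pairwise fun a b => Disjoint (B a).edges (B b).edges) :
    ExactCover V r (Fintype.card ι) (⋃ a, (B a).edges) := by
  let e := (Fintype.equivFin ι).symm
  exact ⟨B ∘ e, fun _ _ hij => hB (e.injective.ne hij),
    e.surjective.iUnion_comp fun a => (B a).edges⟩

lemma exactCover_iUnion_transversals {ι : Type*} [Fintype ι] (p : ι → Fin r → Finset ℕ)
    (hsub : ∀ a i, p a i ⊆ V) (hdisj : ∀ a i j, i ≠ j → Disjoint (p a i) (p a j))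
    (hp : Pairwise fun a b => Disjoint (transversals (p a)) (transversals (p b))) :
    ∃ k ≤ Fintype.card ι, ExactCover V r k (⋃ a, transversals (p a)) := by
  classical
  let B (a : {a // ∀ i, (p a i).Nonempty}) : Block V r := ⟨p a, a.2, hsub a, hdisj a⟩
  have hB : ⋃ a, (B a).edges = ⋃ a, transversals (p a) := by
    ext X
    simp only [Set.mem_iUnion]
    exact ⟨fun ⟨a, ha⟩ => ⟨a, ha⟩, fun ⟨a, ha⟩ => ⟨⟨a, nonempty_of_mem_transversals ha⟩, ha⟩⟩
  exact ⟨_, Fintype.card_subtype_le _, hB ▸ exactCover_iUnion_edges B fun a b hab =>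
    hp (Subtype.coe_injective.ne hab)⟩

lemma ExactCover.union {k l : ℕ} {F G : Set (Finset ℕ)} (hF : ExactCover V r k F)
    (hG : ExactCover V r l G) (hFG : Disjoint F G) : ExactCover V r (k + l) (F ∪ G) := by
  obtain ⟨A, hA, rfl⟩ := hF
  obtain ⟨B, hB, rfl⟩ := hG
  simp only [Set.disjoint_iUnion_left, Set.disjoint_iUnion_right] at hFG
  have h := exactCover_iUnion_edges (Sum.elim A B) (by
    rintro (a | a) (b | b) hab
    exacts [hA a b (by simpa using hab), hFG b a, (hFG a b).symm, hB a b (by simpa using hab)])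
  simpa [Set.iUnion_sum] using h

lemma ExactCover.restrict {k : ℕ} {F : Set (Finset ℕ)} (h : ExactCover V r k F)
    (W : Finset ℕ) : ∃ l ≤ k, ExactCover W r l {X ∈ F | X ⊆ W} := by
  obtain ⟨B, hB, rfl⟩ := h
  have hedges (t : Fin k) : transversals (fun i => (B t).parts i ∩ W) =
      {X ∈ (B t).edges | X ⊆ W} := transversals_inter _ W
  obtain ⟨l, hl, hcov⟩ := exactCover_iUnion_transversals (V := W)
    (fun t i => (B t).parts i ∩ W) (fun _ _ => inter_subset_right)
    (fun t i j hij => ((B t).disj i j hij).mono inter_subset_left inter_subset_left)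
    (fun s t hst => by
      simp only [hedges]
      exact (hB s t hst).mono (Set.sep_subset _ _) (Set.sep_subset _ _))
  refine ⟨l, by simpa using hl, ?_⟩
  convert hcov using 1
  ext X
  simp [hedges]

lemma f_le_of_exactCover {n N k : ℕ} (hnN : n ≤ N)
    (h : ExactCover (range N) r k {X | X ⊆ range N ∧ #X = r}) : f r n ≤ k := by
  obtain ⟨l, hl, hcov⟩ := h.restrict (range n)
  refine (Nat.sInf_le ?_).trans hl
  have hF : {X | X ⊆ range n ∧ #X = r} =
      {X ∈ {X | X ⊆ range N ∧ #X = r} | X ⊆ range n} := by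
    ext X
    have hsub (hX : X ⊆ range n) : X ⊆ range N := hX.trans (range_subset_range.2 hnN)
    simp only [Set.mem_ofPred_eq]
    tauto
  exact hF ▸ hcov

lemma exactCover_oddRanked (V : Finset ℕ) {k : ℕ} (𝓔 : Finset (Finset ℕ))
    (h𝓔 : ∀ E ∈ 𝓔, #E = k) :
    ∃ l ≤ #𝓔, ExactCover V (2 * k + 1) l {X | X ⊆ V ∧ #X = 2 * k + 1 ∧ oddRanked X ∈ 𝓔} := by
  have hedges (E : 𝓔) :
      transversals (fun i : Fin (2 * k + 1) => {x ∈ V | gapIndex E.1 x = i}) =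
        {X | X ⊆ V ∧ #X = 2 * k + 1 ∧ oddRanked X = E.1} := by
    simp only [transversals_fibers, ← h𝓔 E.1 E.2, bijOn_gapIndex_iff]
  obtain ⟨l, hl, hcov⟩ := exactCover_iUnion_transversals (V := V)
    (fun (E : 𝓔) (i : Fin (2 * k + 1)) => {x ∈ V | gapIndex E.1 x = i})
    (fun _ _ => filter_subset _ _)
    (fun E i j hij => disjoint_filter.2 fun x _ hi hj => hij (Fin.ext (hi.symm.trans hj)))
    (fun D E hDE => by
      simp only [hedges]
      exact Set.disjoint_left.2 fun X hD hE => hDE (Subtype.ext (hD.2.2.symm.trans hE.2.2)))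
  refine ⟨l, by simpa using hl, ?_⟩
  convert hcov using 1
  ext X
  simp [hedges]

end Transversals

section Balanced

/-- The family `((S choose 2d) × (T choose 2d + 1)) ∪ ((S choose 2d + 1) × (T choose 2d))` of
subsets of `S ∪ T` that are split between `S` and `T` as evenly as possible. -/
def balancedFamily (S T : Finset ℕ) (d : ℕ) : Set (Finset ℕ) :=
  {X | X ⊆ S ∪ T ∧ ((#(X ∩ S) = 2 * d ∧ #(X ∩ T) = 2 * d + 1) ∨
    (#(X ∩ S) = 2 * d + 1 ∧ #(X ∩ T) = 2 * d))}

lemma card_filter_card_inter_eq {V S : Finset ℕ} (hSV : S ⊆ V) (a b : ℕ) :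
    #{E ∈ V.powersetCard (a + b) | #(E ∩ S) = a} = (#S).choose a * (#(V \ S)).choose b := by
  rw [← card_powersetCard, ← card_powersetCard, ← card_product]
  refine card_nbij' (fun E => (E ∩ S, E \ S)) (fun p => p.1 ∪ p.2)
    (fun E hE => ?_) (fun p hp => ?_) (fun E _ => sup_inf_sdiff E S) (fun p hp => ?_)
  · obtain ⟨hE, ha⟩ := mem_filter.1 hE
    obtain ⟨hEV, hab⟩ := mem_powersetCard.1 hE
    have hb : #(E \ S) = b := by
      have := card_inter_add_card_sdiff E S
      omega
    exact mem_product.2 ⟨mem_powersetCard.2 ⟨inter_subset_right, ha⟩,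
      mem_powersetCard.2 ⟨sdiff_subset_sdiff hEV Subset.rfl, hb⟩⟩
  · obtain ⟨hA, hB⟩ := mem_product.1 hp
    obtain ⟨hAS, hAa⟩ := mem_powersetCard.1 hA
    obtain ⟨hBS, hBb⟩ := mem_powersetCard.1 hB
    have hAB : Disjoint p.1 p.2 := disjoint_sdiff.mono hAS hBS
    have hinter : (p.1 ∪ p.2) ∩ S = p.1 := by grind
    refine mem_filter.2 ⟨mem_powersetCard.2 ⟨?_, ?_⟩, ?_⟩
    · exact union_subset (hAS.trans hSV) (hBS.trans sdiff_subset)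
    · rw [card_union_of_disjoint hAB, hAa, hBb]
    · rw [hinter, hAa]
  · obtain ⟨hA, hB⟩ := mem_product.1 hp
    have hAS := (mem_powersetCard.1 hA).1
    have hBS := (mem_powersetCard.1 hB).1
    ext x <;> grind

variable {d k m N : ℕ}

lemma mem_balancedFamily_iff (hmN : m ≤ N) {X : Finset ℕ} :
    X ∈ balancedFamily (range m) (range N \ range m) d ↔
      X ⊆ range N ∧ #X = 4 * d + 1 ∧ #(oddRanked X ∩ range m) = d := by
  rw [balancedFamily, Set.mem_ofPred_eq, union_sdiff_of_subset (range_subset_range.2 hmN)]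
  refine and_congr_right fun hX => ?_
  have hodd := count_mem_oddRanked X m
  have hcard := card_inter_add_card_sdiff X (range m)
  rw [count_mem_eq_card_inter_range, count_mem_eq_card_inter_range] at hodd
  rw [← inter_sdiff_assoc, inter_eq_left.2 hX]
  omega

lemma exists_exactCover_of_balancedFamily (hmN : m ≤ N)
    (h : ExactCover (range N) (4 * d + 1) k (balancedFamily (range m) (range N \ range m) d)) :
    ∃ l, l + m.choose d * (N - m).choose d ≤ k + N.choose (2 * d) ∧
      ExactCover (range N) (4 * d + 1) l {X | X ⊆ range N ∧ #X = 4 * d + 1} := by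
  have hm : range m ⊆ range N := range_subset_range.2 hmN
  set 𝓤 : Finset (Finset ℕ) := {E ∈ (range N).powersetCard (d + d) | #(E ∩ range m) ≠ d} with h𝓤
  have hcard : m.choose d * (N - m).choose d + #𝓤 = N.choose (2 * d) := by
    have h := card_filter_add_card_filter_not (s := (range N).powersetCard (d + d))
      fun E => #(E ∩ range m) = d
    rw [card_filter_card_inter_eq hm, card_powersetCard, card_sdiff_of_subset hm, card_range,
      card_range] at h
    rwa [two_mul]
  obtain ⟨l, hl, hcov⟩ := exactCover_oddRanked (range N) (k := 2 * d) 𝓤 fun E hE =>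
    (mem_powersetCard.1 (mem_filter.1 hE).1).2.trans (two_mul d).symm
  rw [show 2 * (2 * d) + 1 = 4 * d + 1 by ring] at hcov
  have hmem {X : Finset ℕ} (hX : X ⊆ range N) (hXr : #X = 4 * d + 1) :
      oddRanked X ∈ 𝓤 ↔ #(oddRanked X ∩ range m) ≠ d := by
    have hsub : oddRanked X ⊆ range N := (filter_subset _ _).trans hX
    have := card_oddRanked X
    rw [h𝓤, mem_filter, mem_powersetCard]
    exact and_iff_right ⟨hsub, by omega⟩
  refine ⟨k + l, by omega, ?_⟩
  convert h.union hcov ?_ using 1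
  · ext X
    simp only [Set.mem_union, mem_balancedFamily_iff hmN, Set.mem_ofPred_eq]
    grind
  · refine Set.disjoint_left.2 fun X hbal hunbal => ?_
    exact (hmem hunbal.1 hunbal.2.1).1 hunbal.2.2 ((mem_balancedFamily_iff hmN).1 hbal).2.2

lemma f_add_le_of_balancedFamily {n : ℕ} (hmN : m ≤ N) (hnN : n ≤ N)
    (h : ExactCover (range N) (4 * d + 1) k (balancedFamily (range m) (range N \ range m) d)) :
    f (4 * d + 1) n + m.choose d * (N - m).choose d ≤ k + N.choose (2 * d) := by
  obtain ⟨l, hl, hcov⟩ := exists_exactCover_of_balancedFamily hmN h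
  exact (Nat.add_le_add_right (f_le_of_exactCover hnN hcov) _).trans hl

end Balanced

section Asymptotics

open Filter Topology Asymptotics

lemma isEquivalent_choose_of_isEquivalent {ι : Type*} {l : Filter ι} {u : ι → ℕ} {v : ι → ℝ}
    (huv : (fun i => (u i : ℝ)) ~[l] v) (hu : Tendsto u l atTop) (k : ℕ) :
    (fun i => ((u i).choose k : ℝ)) ~[l] fun i => v i ^ k / k.factorial :=
  ((isEquivalent_choose k).comp_tendsto hu).trans ((huv.pow k).div .refl)

lemma tendsto_div_of_isEquivalent_const_mul {ι : Type*} {l : Filter ι} {u v : ι → ℝ} {c : ℝ}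
    (huv : u ~[l] fun i => c * v i) (hv : ∀ᶠ i in l, v i ≠ 0) :
    Tendsto (fun i => u i / v i) l (𝓝 c) := by
  refine ((huv.div .refl).congr_right ?_).tendsto_const
  filter_upwards [hv] with i hi
  exact mul_div_cancel_right₀ c hi

lemma isEquivalent_ceil_half :
    (fun n : ℕ => (⌈(n : ℝ) / 2⌉₊ : ℝ)) ~[atTop] fun n => (n : ℝ) / 2 :=
  (isEquivalent_nat_ceil (R := ℝ)).comp_tendsto
    (tendsto_natCast_atTop_atTop.atTop_div_const two_pos)

lemma tendsto_ceil_half : Tendsto (fun n : ℕ => ⌈(n : ℝ) / 2⌉₊) atTop atTop :=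
  tendsto_nat_ceil_atTop.comp (tendsto_natCast_atTop_atTop.atTop_div_const two_pos)

lemma le_two_mul_ceil_half (n : ℕ) : n ≤ 2 * ⌈(n : ℝ) / 2⌉₊ := by
  have h := Nat.le_ceil ((n : ℝ) / 2)
  rw [div_le_iff₀' two_pos] at h
  exact_mod_cast h

lemma eventually_choose_ne_zero (k : ℕ) : ∀ᶠ n : ℕ in atTop, (n.choose k : ℝ) ≠ 0 := by
  filter_upwards [eventually_ge_atTop k] with n hn
  exact_mod_cast (Nat.choose_pos hn).ne'

lemma tendsto_choose_two_mul_ceil_half_div_choose (k : ℕ) :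
    Tendsto (fun n : ℕ => ((2 * ⌈(n : ℝ) / 2⌉₊).choose k : ℝ) / n.choose k) atTop (𝓝 1) := by
  refine tendsto_div_of_isEquivalent_const_mul ?_ (eventually_choose_ne_zero k)
  have h : (fun n : ℕ => ((2 * ⌈(n : ℝ) / 2⌉₊ : ℕ) : ℝ)) ~[atTop] fun n => (n : ℝ) := by
    convert (IsEquivalent.refl (u := fun _ : ℕ => (2 : ℝ))).mul isEquivalent_ceil_half using 1
    · exact funext fun n => Nat.cast_mul _ _
    · exact funext fun n => (mul_div_cancel₀ (n : ℝ) two_ne_zero).symm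
  simpa using (isEquivalent_choose_of_isEquivalent h
    (tendsto_ceil_half.const_mul_atTop' two_pos) k).trans (isEquivalent_choose k).symm

lemma tendsto_choose_ceil_half_sq_div_choose (d : ℕ) :
    Tendsto (fun n : ℕ => (⌈(n : ℝ) / 2⌉₊.choose d : ℝ) ^ 2 / n.choose (2 * d)) atTop
      (𝓝 (d.centralBinom / 4 ^ d)) := by
  refine tendsto_div_of_isEquivalent_const_mul ?_ (eventually_choose_ne_zero _)
  have hfact : (d.centralBinom : ℝ) * d.factorial ^ 2 = (2 * d).factorial := by
    have h := Nat.add_choose_mul_factorial_mul_factorial d d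
    rw [← two_mul, ← Nat.centralBinom_eq_two_mul_choose, mul_assoc, ← sq] at h
    exact_mod_cast h
  calc (fun n : ℕ => (⌈(n : ℝ) / 2⌉₊.choose d : ℝ) ^ 2)
      ~[atTop] fun n => (((n : ℝ) / 2) ^ d / d.factorial) ^ 2 :=
        (isEquivalent_choose_of_isEquivalent isEquivalent_ceil_half tendsto_ceil_half d).pow 2
    _ = fun n : ℕ => d.centralBinom / 4 ^ d * ((n : ℝ) ^ (2 * d) / (2 * d).factorial) := by
        ext n
        have h4 : (4 : ℝ) ^ d = (2 ^ d) ^ 2 := by rw [← pow_mul, mul_comm, pow_mul]; norm_num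
        have hc : (d.centralBinom : ℝ) ≠ 0 := by exact_mod_cast d.centralBinom_ne_zero
        rw [← hfact, h4, pow_mul', div_pow (n : ℝ) 2 d]
        field_simp
    _ ~[atTop] fun n => d.centralBinom / 4 ^ d * n.choose (2 * d) :=
        IsEquivalent.refl.mul (isEquivalent_choose (2 * d)).symm

lemma exp_neg_lt_centralBinom_div_four_pow {d : ℕ} {x : ℝ} (hx : 2 * d < x) :
    Real.exp (-x) < d.centralBinom / 4 ^ d := by
  have hc : (0 : ℝ) < d.centralBinom := by exact_mod_cast d.centralBinom_pos
  have h4 : (4 : ℝ) ^ d ≤ (2 * d + 1) * d.centralBinom := by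
    exact_mod_cast d.four_pow_le_two_mul_add_one_mul_central_binom
  rw [Real.exp_neg, inv_lt_comm₀ (Real.exp_pos x) (by positivity), inv_div]
  calc (4 : ℝ) ^ d / d.centralBinom ≤ 2 * d + 1 := (div_le_iff₀ hc).2 h4
    _ < x + 1 := by linarith
    _ ≤ Real.exp x := Real.add_one_le_exp x

lemma one_sub_mul_centralBinom_lt {d : ℕ} {α x : ℝ} (hα : α < 1) (hx : 2 * d < x) :
    1 - (1 - α) * (d.centralBinom / 4 ^ d) < 1 - (1 - α) / Real.exp x := by
  rw [div_eq_mul_inv (1 - α), ← Real.exp_neg]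
  gcongr
  exact exp_neg_lt_centralBinom_div_four_pow hx

lemma one_sub_div_exp_nonneg {α x : ℝ} (hα : 0 ≤ α) (hx : 0 ≤ x) :
    0 ≤ 1 - (1 - α) / Real.exp x :=
  sub_nonneg.2 (div_le_one_of_le₀ ((sub_le_self 1 hα).trans (Real.one_le_exp hx))
    (Real.exp_pos x).le)

theorem eventually_f_le_of_balancedFamily (d : ℕ) (α : ℝ)
    (hcov : ∀ ε : ℝ, 0 < ε → ∀ᶠ m : ℕ in atTop, ∃ k : ℕ,
      ExactCover (range (2 * m)) (4 * d + 1) k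
        (balancedFamily (range m) (range (2 * m) \ range m) d) ∧
      (k : ℝ) ≤ (α + ε) * (m.choose d : ℝ) ^ 2) :
    ∀ ε : ℝ, 0 < ε → ∀ᶠ n : ℕ in atTop,
      (f (4 * d + 1) n : ℝ) ≤
        (1 - (1 - α) * (d.centralBinom / 4 ^ d) + ε) * n.choose (2 * d) := by
  intro ε hε
  have hlim : Tendsto (fun n : ℕ => ((2 * ⌈(n : ℝ) / 2⌉₊).choose (2 * d) : ℝ) / n.choose (2 * d) -
      (1 - (α + ε / 2)) * ((⌈(n : ℝ) / 2⌉₊.choose d : ℝ) ^ 2 / n.choose (2 * d))) atTop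
      (𝓝 (1 - (1 - (α + ε / 2)) * (d.centralBinom / 4 ^ d))) :=
    (tendsto_choose_two_mul_ceil_half_div_choose (2 * d)).sub
      ((tendsto_choose_ceil_half_sq_div_choose d).const_mul _)
  have hconst : 1 - (1 - (α + ε / 2)) * (d.centralBinom / 4 ^ d) <
      1 - (1 - α) * (d.centralBinom / 4 ^ d) + ε := by
    have hq : (d.centralBinom : ℝ) / 4 ^ d ≤ 1 :=
      div_le_one_of_le₀ (by exact_mod_cast d.centralBinom_le_four_pow) (by positivity)
    nlinarith
  filter_upwards [hlim.eventually_lt_const hconst,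
    tendsto_ceil_half.eventually (hcov (ε / 2) (half_pos hε)), eventually_choose_ne_zero (2 * d)]
    with n hn ⟨k, hk, hkle⟩ hne
  have hf : (f (4 * d + 1) n : ℝ) + (⌈(n : ℝ) / 2⌉₊.choose d : ℝ) ^ 2 ≤
      k + (2 * ⌈(n : ℝ) / 2⌉₊).choose (2 * d) := by
    have h := f_add_le_of_balancedFamily (by omega) (le_two_mul_ceil_half n) hk
    rw [two_mul, Nat.add_sub_cancel, ← sq, ← two_mul] at h
    exact_mod_cast h
  rw [← mul_div_assoc, ← sub_div, div_lt_iff₀ (by positivity)] at hn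
  linarith

end Asymptotics

theorem odd_from_balanced_cover (d : ℕ) (hd : 1 ≤ d) (r : ℕ) (hr : r = 4 * d + 1)
    (α : ℝ) (hα0 : 0 ≤ α) (hα1 : α < 1)
    (hcov : ∀ ε : ℝ, 0 < ε → ∃ N : ℕ, ∀ n : ℕ, Even n → N ≤ n →
      ∀ S T : Finset ℕ, Disjoint S T → S ∪ T = Finset.range n →
        S.card = n / 2 → T.card = n / 2 →
        ∃ k : ℕ,
          ExactCover (Finset.range n) r k
            {X | X ⊆ S ∪ T ∧
              (((X ∩ S).card = 2 * d ∧ (X ∩ T).card = 2 * d + 1) ∨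
               ((X ∩ S).card = 2 * d + 1 ∧ (X ∩ T).card = 2 * d))} ∧
          (k : ℝ) ≤ α * (1 + ε) * ((n / 2).choose d : ℝ) ^ 2) :
    ∀ ε : ℝ, 0 < ε → ∃ M : ℕ, ∀ n : ℕ, M ≤ n →
      (f r n : ℝ) ≤ (1 - (1 - α) / Real.exp ((r : ℝ) / 2)) * (1 + ε) * (n.choose (2 * d)) := by
  subst hr
  intro ε hε
  set c : ℝ := 1 - (1 - α) / Real.exp (((4 * d + 1 : ℕ) : ℝ) / 2)
  have hlt : 1 - (1 - α) * (d.centralBinom / 4 ^ d) < c :=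
    one_sub_mul_centralBinom_lt hα1 (by push_cast; linarith)
  have hc0 : 0 ≤ c := one_sub_div_exp_nonneg hα0 (by positivity)
  have hbal (δ : ℝ) (hδ : 0 < δ) : ∀ᶠ m : ℕ in Filter.atTop, ∃ k : ℕ,
      ExactCover (range (2 * m)) (4 * d + 1) k
        (balancedFamily (range m) (range (2 * m) \ range m) d) ∧
      (k : ℝ) ≤ (α + δ) * (m.choose d : ℝ) ^ 2 := by
    obtain ⟨N, hN⟩ := hcov δ hδ
    filter_upwards [Filter.eventually_ge_atTop N] with m hm
    have hsub : range m ⊆ range (2 * m) := range_subset_range.2 (by omega)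
    obtain ⟨k, hk, hkle⟩ := hN (2 * m) (even_two_mul m) (by omega) _ _ disjoint_sdiff
      (union_sdiff_of_subset hsub) (by simp)
      (by rw [card_sdiff_of_subset hsub, card_range, card_range]; omega)
    rw [Nat.mul_div_cancel_left m two_pos] at hkle
    exact ⟨k, hk, hkle.trans (by gcongr; nlinarith)⟩
  refine Filter.eventually_atTop.1
    ((eventually_f_le_of_balancedFamily d α hbal _ (sub_pos.2 hlt)).mono fun n hn => ?_)
  rw [add_sub_cancel] at hn
  exact hn.trans (by gcongr; exact le_mul_of_one_le_right hc0 (by linarith))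
end
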